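/- arXiv:1501.01561 — 5 statements merged into one kernel-verified Lean document; each statement's English description precedes it below -/
import Mathlib

section
/- Let X : ℕ → Ω → ℝ be a stationary sequence of random variables and u ∈ ℝ with P{X_1 > u} > 0. Let T*(u) be the first hitting time of the level u and let T1(u) be the inter-cluster size, i.e. P{T1(u) = n} = P{max_{2≤i≤n} X_i ≤ u, X_{n+1} > u | X_1 > u} (with max over the empty index set equal to −∞, so for n = 1 the condition max_{2≤i≤1} is vacuous). Then for every integer n ≥ 1: P{X_1 > u}·P{T1(u) = n} = P{T*(u) = n} − P{T*(u) = n+1}. -/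
open MeasureTheory ProbabilityTheory Filter

/-- First hitting time of the level `u` by the sequence `X` (indexed from 1):
`T*(u) = min {j ≥ 1 : X j > u}`, with value `⊤` if the level is never exceeded. -/
noncomputable def hittingTime {Ω : Type*} (X : ℕ → Ω → ℝ) (u : ℝ) (ω : Ω) : ℕ∞ :=
  sInf ((fun j : ℕ => (j : ℕ∞)) '' {j : ℕ | 1 ≤ j ∧ u < X j ω})

/-- The sequence `X` (indexed from 1) is stationary: for every `k` and `m ≥ 1`
the joint law of `(X_{1+k}, ..., X_{m+k})` equals the joint law of `(X_1, ..., X_m)`. -/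
def IsStationarySeq {Ω : Type*} [MeasurableSpace Ω] (P : Measure Ω)
    (X : ℕ → Ω → ℝ) : Prop :=
  ∀ k m : ℕ, 1 ≤ m →
    P.map (fun ω => fun i : Fin m => X (i.val + 1 + k) ω) =
      P.map (fun ω => fun i : Fin m => X (i.val + 1) ω)

lemma hittingTime_eq_iff_aux {Ω : Type*} (X : ℕ → Ω → ℝ) (u : ℝ) (ω : Ω) (n : ℕ) (hn : 1 ≤ n) :
    hittingTime X u ω = (n : ℕ∞) ↔ (∀ i ∈ Finset.Icc 1 (n - 1), X i ω ≤ u) ∧ u < X n ω := by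
  unfold hittingTime
  constructor
  · intro h
    have hne : ((fun j : ℕ => (j : ℕ∞)) '' {j : ℕ | 1 ≤ j ∧ u < X j ω}).Nonempty := by
      by_contra hc
      rw [Set.not_nonempty_iff_eq_empty] at hc
      rw [hc, sInf_empty] at h
      exact absurd h (by simp)
    have hm := csInf_mem hne
    rw [h] at hm
    obtain ⟨j, ⟨_, hj2⟩, hj⟩ := hm
    have hjn : j = n := by
      simp only at hj
      exact_mod_cast hj
    subst hjn
    refine ⟨fun i hi => ?_, hj2⟩
    by_contra hc
    rw [Finset.mem_Icc] at hi
    have hle := sInf_le (Set.mem_image_of_mem (fun j : ℕ => (j : ℕ∞))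
      (show i ∈ {j : ℕ | 1 ≤ j ∧ u < X j ω} from ⟨hi.1, not_le.mp hc⟩))
    rw [h] at hle
    have : j ≤ i := by exact_mod_cast hle
    omega
  · rintro ⟨h1, h2⟩
    apply le_antisymm
    · exact sInf_le ⟨n, ⟨hn, h2⟩, rfl⟩
    · apply le_sInf
      rintro _ ⟨j, ⟨hj1, hj2⟩, rfl⟩
      by_contra hc
      have hlt : j < n := by
        simp only [not_le] at hc
        exact_mod_cast hc
      exact absurd (h1 j (Finset.mem_Icc.mpr ⟨hj1, by omega⟩)) (not_le.mpr hj2)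

/-- For a stationary sequence with `P{X_1 > u} > 0` and every `n ≥ 1`,
`P{X_1 > u} ⬝ P{T1(u) = n} = P{T*(u) = n} − P{T*(u) = n+1}`, where
`P{T1(u) = n} = P{max_{2≤i≤n} X_i ≤ u, X_{n+1} > u | X_1 > u}` is the distribution of
the inter-cluster size and `T*(u)` is the first hitting time of the level `u`. -/
theorem interCluster_eq_hitting_diff {Ω : Type*} [MeasurableSpace Ω] (P : Measure Ω)
    [IsProbabilityMeasure P] (X : ℕ → Ω → ℝ) (hX : ∀ i, Measurable (X i))
    (hstat : IsStationarySeq P X) (u : ℝ)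
    (hu : 0 < P {ω | u < X 1 ω}) (n : ℕ) (hn : 1 ≤ n) :
    (P {ω | u < X 1 ω}).toReal *
        (P[{ω | (∀ i ∈ Finset.Icc 2 n, X i ω ≤ u) ∧ u < X (n + 1) ω} | {ω | u < X 1 ω}]).toReal =
      (P {ω | hittingTime X u ω = (n : ℕ∞)}).toReal -
        (P {ω | hittingTime X u ω = ((n + 1 : ℕ) : ℕ∞)}).toReal := by
  have hA : MeasurableSet {ω | u < X 1 ω} := measurableSet_lt measurable_const (hX 1)
  set A := {ω | u < X 1 ω} with hAdef
  set B := {ω | (∀ i ∈ Finset.Icc 2 n, X i ω ≤ u) ∧ u < X (n + 1) ω} with hBdef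
  have hmul : P.real (A ∩ B) = (P A).toReal * (P[B | A]).toReal := by
    rw [← ENNReal.toReal_mul, mul_comm, cond_mul_eq_inter hA]
    rfl
  have hdiff : {ω | hittingTime X u ω = ((n + 1 : ℕ) : ℕ∞)} = B \ A := by
    ext ω
    simp only [Set.mem_ofPred_eq, hittingTime_eq_iff_aux X u ω (n + 1) (by omega), hAdef, hBdef,
      Set.mem_sdiff, Finset.mem_Icc, not_lt, Nat.add_sub_cancel]
    constructor
    · rintro ⟨h1, h2⟩
      exact ⟨⟨fun i hi => h1 i ⟨by omega, hi.2⟩, h2⟩, h1 1 ⟨le_rfl, hn⟩⟩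
    · rintro ⟨⟨h1, h2⟩, h3⟩
      refine ⟨fun i hi => ?_, h2⟩
      rcases Nat.lt_or_ge i 2 with h | h
      · obtain rfl : i = 1 := by omega
        exact h3
      · exact h1 i ⟨h, hi.2⟩
  have hstatB : P {ω | hittingTime X u ω = (n : ℕ∞)} = P B := by
    let S : Set (Fin n → ℝ) := {x | (∀ i : Fin n, i.val + 1 < n → x i ≤ u) ∧
      u < x ⟨n - 1, by omega⟩}
    have hS : MeasurableSet S := by
      refine measurableSet_setOfPred.2 (Measurable.and ?_ ?_)
      · exact Measurable.forall fun i => Measurable.forall fun _ =>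
          measurableSet_setOfPred.1 (measurableSet_le (measurable_pi_apply i) measurable_const)
      · exact measurableSet_setOfPred.1
          (measurableSet_lt measurable_const (measurable_pi_apply _))
    have h : P.map (fun ω => fun i : Fin n => X (i.val + 1 + 1) ω) S =
        P.map (fun ω => fun i : Fin n => X (i.val + 1) ω) S := by rw [hstat 1 n hn]
    rw [Measure.map_apply (measurable_pi_lambda _ fun i => hX _) hS,
      Measure.map_apply (measurable_pi_lambda _ fun i => hX _) hS] at h
    have e1 : (fun ω => fun i : Fin n => X (i.val + 1 + 1) ω) ⁻¹' S = B := by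
      ext ω
      simp only [S, hBdef, Set.mem_preimage, Set.mem_ofPred_eq, Finset.mem_Icc,
        Nat.sub_add_cancel hn]
      refine and_congr_left fun _ => ⟨fun h i hi => ?_, fun h i hi => h _ ⟨by omega, by omega⟩⟩
      have := h ⟨i - 2, by omega⟩ (by simp only; omega)
      simpa only [show i - 2 + 1 + 1 = i by omega] using this
    have e2 : (fun ω => fun i : Fin n => X (i.val + 1) ω) ⁻¹' S =
        {ω | hittingTime X u ω = (n : ℕ∞)} := by
      ext ω
      simp only [S, hittingTime_eq_iff_aux X u ω n hn, Set.mem_preimage, Set.mem_ofPred_eq,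
        Finset.mem_Icc, Nat.sub_add_cancel hn]
      refine and_congr_left fun _ => ⟨fun h i hi => ?_, fun h i hi => h _ ⟨by omega, by omega⟩⟩
      have := h ⟨i - 1, by omega⟩ (by simp only; omega)
      simpa only [show i - 1 + 1 = i by omega] using this
    rw [e1, e2] at h
    exact h.symm
  have hsum := measureReal_inter_add_sdiff (μ := P) (s := B) hA
  rw [← hmul, hstatB, hdiff, Set.inter_comm]
  simp only [Measure.real] at hsum ⊢
  linarith
end

section
/- Let X : ℕ → Ω → ℝ be a stationary sequence of random variables and u ∈ ℝ with P{X_1 > u} > 0. Then for every integer n ≥ 1: P{X_1 > u}·P{T1(u) > n} = P{T*(u) = n+1}, where P{T1(u) > n} = P{max_{2≤i≤n+1} X_i ≤ u | X_1 > u} and T*(u) is the first hitting time of the level u. Equivalently, P{X_1 > u, max_{2≤i≤n+1} X_i ≤ u} = P{max_{1≤i≤n} X_i ≤ u} − P{max_{1≤i≤n+1} X_i ≤ u}. -/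
open MeasureTheory ProbabilityTheory Filter

/-- For a stationary sequence with `P{X_1 > u} > 0` and every `n ≥ 1`,
`P{X_1 > u} ⬝ P{T1(u) > n} = P{T*(u) = n + 1}`, where
`P{T1(u) > n} = P{max_{2≤i≤n+1} X_i ≤ u | X_1 > u}` and `T*(u)` is the first hitting
time of the level `u`. Equivalently,
`P{X_1 > u, max_{2≤i≤n+1} X_i ≤ u} = P{max_{1≤i≤n} X_i ≤ u} − P{max_{1≤i≤n+1} X_i ≤ u}`. -/
theorem interCluster_tail_eq_hitting {Ω : Type*} [MeasurableSpace Ω] (P : Measure Ω)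
    [IsProbabilityMeasure P] (X : ℕ → Ω → ℝ) (hX : ∀ i, Measurable (X i))
    (hstat : IsStationarySeq P X) (u : ℝ)
    (hu : 0 < P {ω | u < X 1 ω}) (n : ℕ) (hn : 1 ≤ n) :
    (P {ω | u < X 1 ω}).toReal *
        (P[{ω | ∀ i ∈ Finset.Icc 2 (n + 1), X i ω ≤ u} | {ω | u < X 1 ω}]).toReal =
      (P {ω | hittingTime X u ω = ((n + 1 : ℕ) : ℕ∞)}).toReal ∧
    (P {ω | u < X 1 ω ∧ ∀ i ∈ Finset.Icc 2 (n + 1), X i ω ≤ u}).toReal =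
      (P {ω | ∀ i ∈ Finset.Icc 1 n, X i ω ≤ u}).toReal -
        (P {ω | ∀ i ∈ Finset.Icc 1 (n + 1), X i ω ≤ u}).toReal := by
  have hm : ∀ s : Finset ℕ, MeasurableSet {ω | ∀ i ∈ s, X i ω ≤ u} := by
    intro s
    have : {ω | ∀ i ∈ s, X i ω ≤ u} = ⋂ i ∈ s, {ω | X i ω ≤ u} := by
      ext ω; simp
    rw [this]
    exact Finset.measurableSet_biInter s
      (fun i _ => measurableSet_le (hX i) measurable_const)
  have hm1 : MeasurableSet {ω | u < X 1 ω} := measurableSet_lt measurable_const (hX 1)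
  have hAB : P {ω | ∀ i ∈ Finset.Icc 2 (n + 1), X i ω ≤ u} =
      P {ω | ∀ i ∈ Finset.Icc 1 n, X i ω ≤ u} := by
    have hS : MeasurableSet {v : Fin n → ℝ | ∀ i, v i ≤ u} := by
      have : {v : Fin n → ℝ | ∀ i, v i ≤ u} = ⋂ i, {v | v i ≤ u} := by
        ext v; simp
      rw [this]
      exact MeasurableSet.iInter
        (fun i => measurableSet_le (measurable_pi_apply i) measurable_const)
    have h := congrArg (fun μ => μ {v : Fin n → ℝ | ∀ i, v i ≤ u}) (hstat 1 n hn)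
    rw [Measure.map_apply (measurable_pi_lambda _ fun i => hX _) hS,
      Measure.map_apply (measurable_pi_lambda _ fun i => hX _) hS] at h
    convert h using 2
    · ext ω
      simp only [Set.mem_ofPred_eq, Set.mem_preimage, Finset.mem_Icc]
      constructor
      · intro H i
        exact H _ ⟨by omega, by omega⟩
      · intro H i hi
        have := H ⟨i - 2, by omega⟩
        have e : i - 2 + 1 + 1 = i := by omega
        simpa only [e] using this
    · ext ω
      simp only [Set.mem_ofPred_eq, Set.mem_preimage, Finset.mem_Icc]
      constructor
      · intro H i
        exact H _ ⟨by omega, by omega⟩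
      · intro H i hi
        have := H ⟨i - 1, by omega⟩
        have e : i - 1 + 1 = i := by omega
        simpa only [e] using this
  have hD : {ω | u < X 1 ω ∧ ∀ i ∈ Finset.Icc 2 (n + 1), X i ω ≤ u} =
      {ω | ∀ i ∈ Finset.Icc 2 (n + 1), X i ω ≤ u} \
        {ω | ∀ i ∈ Finset.Icc 1 (n + 1), X i ω ≤ u} := by
    ext ω
    simp only [Set.mem_ofPred_eq, Set.mem_sdiff, Finset.mem_Icc]
    constructor
    · rintro ⟨h1, h2⟩
      exact ⟨h2, fun h => absurd (h 1 ⟨le_rfl, by omega⟩) (not_le.2 h1)⟩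
    · rintro ⟨h2, h⟩
      refine ⟨?_, h2⟩
      by_contra h1
      apply h
      intro i hi
      rcases Nat.eq_or_lt_of_le hi.1 with e | e
      · rw [← e]; exact not_lt.1 h1
      · exact h2 i ⟨e, hi.2⟩
  have hH : {ω | hittingTime X u ω = ((n + 1 : ℕ) : ℕ∞)} =
      {ω | ∀ i ∈ Finset.Icc 1 n, X i ω ≤ u} \
        {ω | ∀ i ∈ Finset.Icc 1 (n + 1), X i ω ≤ u} := by
    ext ω
    simp only [Set.mem_ofPred_eq, Set.mem_sdiff, Finset.mem_Icc]
    constructor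
    · intro h
      unfold hittingTime at h
      have hne : ((fun j : ℕ => (j : ℕ∞)) '' {j : ℕ | 1 ≤ j ∧ u < X j ω}).Nonempty := by
        rw [Set.nonempty_iff_ne_empty]
        intro he
        rw [he, sInf_empty] at h
        exact ENat.natCast_ne_top _ h.symm
      have hmem := csInf_mem hne
      rw [h] at hmem
      obtain ⟨j, ⟨hj1, hj⟩, hjn⟩ := hmem
      have hjn' : j = n + 1 := Nat.cast_injective (R := ℕ∞) hjn
      subst hjn'
      refine ⟨fun i hi => ?_, fun H => absurd (H (n + 1) ⟨hj1, le_rfl⟩) (not_le.2 hj)⟩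
      by_contra hlt
      have hle := sInf_le (Set.mem_image_of_mem (fun j : ℕ => (j : ℕ∞))
        (show i ∈ {j : ℕ | 1 ≤ j ∧ u < X j ω} from ⟨hi.1, not_le.1 hlt⟩))
      rw [h] at hle
      have : n + 1 ≤ i := by exact_mod_cast hle
      omega
    · rintro ⟨h1, h2⟩
      have hlt : u < X (n + 1) ω := by
        by_contra hc
        apply h2
        intro i hi
        rcases Nat.eq_or_lt_of_le hi.2 with e | e
        · rw [e]; exact not_lt.1 hc
        · exact h1 i ⟨hi.1, by omega⟩
      unfold hittingTime
      apply le_antisymm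
      · exact sInf_le ⟨n + 1, ⟨by omega, hlt⟩, rfl⟩
      · apply le_sInf
        rintro _ ⟨j, ⟨hj1, hj⟩, rfl⟩
        have : n + 1 ≤ j := by
          by_contra hc
          exact absurd (h1 j ⟨hj1, by omega⟩) (not_le.2 hj)
        exact Nat.cast_le (α := ℕ∞).2 this
  have sub1 : {ω | ∀ i ∈ Finset.Icc 1 (n + 1), X i ω ≤ u} ⊆
      {ω | ∀ i ∈ Finset.Icc 2 (n + 1), X i ω ≤ u} := by
    intro ω h i hi
    rw [Finset.mem_Icc] at hi
    exact h i (Finset.mem_Icc.2 ⟨by omega, hi.2⟩)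
  have sub2 : {ω | ∀ i ∈ Finset.Icc 1 (n + 1), X i ω ≤ u} ⊆
      {ω | ∀ i ∈ Finset.Icc 1 n, X i ω ≤ u} := by
    intro ω h i hi
    rw [Finset.mem_Icc] at hi
    exact h i (Finset.mem_Icc.2 ⟨hi.1, by omega⟩)
  have hDP := measure_sdiff sub1 (hm _).nullMeasurableSet (measure_ne_top P _)
  have hHP := measure_sdiff sub2 (hm _).nullMeasurableSet (measure_ne_top P _)
  rw [← hD, hAB] at hDP
  rw [← hH] at hHP
  constructor
  · rw [hHP, ← hDP, ← ENNReal.toReal_mul, mul_comm,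
      cond_mul_eq_inter hm1]
    rfl
  · rw [hDP, ENNReal.toReal_sub_of_le (measure_mono sub2) (measure_ne_top P _)]
end

section
/- Let X : ℕ → Ω → ℝ be a stationary sequence of random variables and u ∈ ℝ with ρ := P{X_1 > u} > 0. Assume that conditionally on {X_1 > u} the inter-cluster size T1(u) is almost surely finite, i.e. Σ_{i=1}^∞ P{T1(u) = i} = 1. Then for every integer n ≥ 1: P{T*(u) = n+1} = ρ · Σ_{i=n+1}^∞ P{T1(u) = i}, where T*(u) is the first hitting time of the level u. -/
open MeasureTheory ProbabilityTheory Filter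

/-- Distribution of the inter-cluster size:
`P{T1(u) = m} = P{max_{2≤i≤m} X_i ≤ u, X_{m+1} > u | X_1 > u}`. -/
noncomputable def interClusterProb {Ω : Type*} [MeasurableSpace Ω] (P : Measure Ω)
    (X : ℕ → Ω → ℝ) (u : ℝ) (m : ℕ) : ℝ :=
  (P[{ω | (∀ i ∈ Finset.Icc 2 m, X i ω ≤ u) ∧ u < X (m + 1) ω} | {ω | u < X 1 ω}]).toReal

/-- The first hitting time is `k + 1` iff `X_1, ..., X_k ≤ u < X_{k+1}`. -/
lemma hit_iff {Ω : Type*} (X : ℕ → Ω → ℝ) (u : ℝ) (ω : Ω) (k : ℕ) :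
    hittingTime X u ω = ((k + 1 : ℕ) : ℕ∞) ↔
      (∀ j < k, X (j + 1) ω ≤ u) ∧ u < X (k + 1) ω := by
  unfold hittingTime
  constructor
  · intro h
    have hne : ((fun j : ℕ => (j : ℕ∞)) '' {j : ℕ | 1 ≤ j ∧ u < X j ω}).Nonempty := by
      by_contra hne
      rw [Set.not_nonempty_iff_eq_empty] at hne
      rw [hne, sInf_empty] at h
      exact ENat.natCast_ne_top _ h.symm
    have hmem := csInf_mem hne
    rw [h] at hmem
    obtain ⟨j, ⟨hj1, hj2⟩, hj⟩ := hmem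
    have hj' : j = k + 1 := by
      have hj3 : (j : ℕ∞) = ((k + 1 : ℕ) : ℕ∞) := hj
      exact_mod_cast hj3
    subst hj'
    refine ⟨fun i hi => ?_, hj2⟩
    by_contra hc
    have hle : sInf ((fun j : ℕ => (j : ℕ∞)) '' {j : ℕ | 1 ≤ j ∧ u < X j ω}) ≤ ((i + 1 : ℕ) : ℕ∞) :=
      sInf_le ⟨i + 1, ⟨by omega, not_le.mp hc⟩, rfl⟩
    rw [h] at hle
    have : k + 1 ≤ i + 1 := by exact_mod_cast hle
    omega
  · rintro ⟨h1, h2⟩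
    apply le_antisymm
    · exact sInf_le ⟨k + 1, ⟨by omega, h2⟩, rfl⟩
    · apply le_sInf
      rintro _ ⟨j, ⟨hj1, hj2⟩, rfl⟩
      have : k + 1 ≤ j := by
        by_contra hc
        have := h1 (j - 1) (by omega)
        rw [Nat.sub_add_cancel hj1] at this
        linarith
      exact Nat.cast_le.mpr this

lemma hit_shift {Ω : Type*} [MeasurableSpace Ω] (P : Measure Ω)
    (X : ℕ → Ω → ℝ) (hX : ∀ i, Measurable (X i))
    (hstat : IsStationarySeq P X) (u : ℝ) (k : ℕ) :
    P {ω | (∀ j < k, X (j + 1 + 1) ω ≤ u) ∧ u < X (k + 1 + 1) ω} =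
      P {ω | (∀ j < k, X (j + 1) ω ≤ u) ∧ u < X (k + 1) ω} := by
  have h := hstat 1 (k + 1) (by omega)
  let B : Set (Fin (k + 1) → ℝ) :=
    (⋂ j : Fin k, {v | v j.castSucc ≤ u}) ∩ {v | u < v (Fin.last k)}
  have hB : MeasurableSet B := by
    refine MeasurableSet.inter (MeasurableSet.iInter fun j => ?_) ?_
    · exact measurableSet_le (measurable_pi_apply _) measurable_const
    · exact measurableSet_lt measurable_const (measurable_pi_apply _)
  have h' := congrArg (fun μ => μ B) h
  rw [Measure.map_apply (measurable_pi_lambda _ fun i => hX _) hB,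
    Measure.map_apply (measurable_pi_lambda _ fun i => hX _) hB] at h'
  convert h' using 2
  · ext ω
    simp [B, Fin.forall_iff]
  · ext ω
    simp [B, Fin.forall_iff]

lemma hit_step {Ω : Type*} [MeasurableSpace Ω] (P : Measure Ω)
    [IsProbabilityMeasure P] (X : ℕ → Ω → ℝ) (hX : ∀ i, Measurable (X i))
    (hstat : IsStationarySeq P X) (u : ℝ) (hu : 0 < P {ω | u < X 1 ω}) (k : ℕ) :
    P.real {ω | (∀ j < k, X (j + 1) ω ≤ u) ∧ u < X (k + 1) ω} =
      P.real {ω | (∀ j < k + 1, X (j + 1) ω ≤ u) ∧ u < X (k + 1 + 1) ω} +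
      P.real {ω | u < X 1 ω} * interClusterProb P X u (k + 1) := by
  have hA : MeasurableSet {ω | u < X 1 ω} := measurableSet_lt measurable_const (hX 1)
  have h0 : P.real {ω | u < X 1 ω} ≠ 0 := by
    rw [measureReal_def, ENNReal.toReal_ne_zero]
    exact ⟨hu.ne', measure_ne_top _ _⟩
  have e1 : P.real {ω | u < X 1 ω} * interClusterProb P X u (k + 1) =
      P.real ({ω | (∀ j < k, X (j + 1 + 1) ω ≤ u) ∧ u < X (k + 1 + 1) ω} ∩ {ω | u < X 1 ω}) := by
    unfold interClusterProb
    rw [cond_apply hA, ENNReal.toReal_mul, ENNReal.toReal_inv, ← measureReal_def,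
      ← measureReal_def, mul_inv_cancel_left₀ h0, Set.inter_comm]
    congr 2
    ext ω
    simp only [Set.mem_ofPred_eq, Finset.mem_Icc]
    refine and_congr_left fun _ => ⟨fun h j hj => h _ (by omega), fun h i hi => ?_⟩
    have := h (i - 2) (by omega)
    rwa [show i - 2 + 1 + 1 = i by omega] at this
  have e2 : {ω | (∀ j < k + 1, X (j + 1) ω ≤ u) ∧ u < X (k + 1 + 1) ω} =
      {ω | (∀ j < k, X (j + 1 + 1) ω ≤ u) ∧ u < X (k + 1 + 1) ω} \ {ω | u < X 1 ω} := by
    ext ω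
    simp only [Set.mem_ofPred_eq, Set.mem_sdiff, not_lt]
    constructor
    · rintro ⟨h1, h2⟩
      exact ⟨⟨fun j hj => h1 (j + 1) (by omega), h2⟩, h1 0 (by omega)⟩
    · rintro ⟨⟨h1, h2⟩, h3⟩
      refine ⟨fun j hj => ?_, h2⟩
      cases j with
      | zero => exact h3
      | succ j => exact h1 j (by omega)
  rw [e1, e2, measureReal_sdiff_add_inter hA, measureReal_def, measureReal_def,
    hit_shift P X hX hstat u k]

/-- For a stationary sequence with `ρ := P{X_1 > u} > 0`, if the inter-cluster size
`T1(u)` is almost surely finite given `{X_1 > u}` (i.e. `Σ_{i=1}^∞ P{T1(u) = i} = 1`),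
then for every `n ≥ 1`, `P{T*(u) = n+1} = ρ ⬝ Σ_{i=n+1}^∞ P{T1(u) = i}`,
where `T*(u)` is the first hitting time of the level `u`. -/
theorem prob_hitting_eq_tail_sum {Ω : Type*} [MeasurableSpace Ω] (P : Measure Ω)
    [IsProbabilityMeasure P] (X : ℕ → Ω → ℝ) (hX : ∀ i, Measurable (X i))
    (hstat : IsStationarySeq P X) (u : ℝ) (hu : 0 < P {ω | u < X 1 ω})
    (hfin : ∑' i : ℕ, interClusterProb P X u (i + 1) = 1)
    (n : ℕ) (hn : 1 ≤ n) :
    (P {ω | hittingTime X u ω = ((n + 1 : ℕ) : ℕ∞)}).toReal =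
      (P {ω | u < X 1 ω}).toReal * ∑' i : ℕ, interClusterProb P X u (n + 1 + i) := by
  have key : ∀ k : ℕ, P.real {ω | (∀ j < k, X (j + 1) ω ≤ u) ∧ u < X (k + 1) ω} =
      P.real {ω | u < X 1 ω} * (1 - ∑ i ∈ Finset.range k, interClusterProb P X u (i + 1)) := by
    intro k
    induction k with
    | zero => simp
    | succ k ih =>
      have := hit_step P X hX hstat u hu k
      rw [Finset.sum_range_succ]
      linarith
  have hsum : Summable fun i : ℕ => interClusterProb P X u (i + 1) := by
    by_contra hc
    rw [tsum_eq_zero_of_not_summable hc] at hfin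
    exact zero_ne_one hfin
  have htail := hsum.sum_add_tsum_nat_add n
  rw [hfin] at htail
  have e : (fun i : ℕ => interClusterProb P X u (n + 1 + i)) =
      fun i : ℕ => interClusterProb P X u (i + n + 1) := by
    funext i
    congr 1
    omega
  simp only [hit_iff]
  rw [e, ← measureReal_def, ← measureReal_def, key n, ← htail]
  ring
end

section
/- Let X : ℕ → Ω → ℝ be a sequence of random variables with common marginal distribution function F, and suppose X has extremal index θ ∈ (0, 1] in the strong sense: for every real sequence (v_n) and every s > 0, if n(1 − F(v_n)) → s then P{max{X_1,...,X_n} ≤ v_n} → e^{−θs}. Let τ > 0 and let (u_n) be a sequence of thresholds with n(1 − F(u_n)) → τ. Then for every x > 0, lim_{n→∞} P{T*(u_n) > n·x} = e^{−θτx}, where T*(u) = min{j ≥ 1 : X_j > u} is the first hitting time (and T*(u_n) > n·x means T*(u_n) > ⌊n x⌋). -/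
open MeasureTheory Filter

theorem lt_hittingTime_iff {Ω : Type*} (X : ℕ → Ω → ℝ) (u : ℝ) (ω : Ω) (k : ℕ) :
    (k : ℕ∞) < hittingTime X u ω ↔ ∀ i ∈ Finset.Icc 1 k, X i ω ≤ u := by
  rw [← ENat.add_one_le_iff (ENat.natCast_ne_top k), hittingTime, le_sInf_iff]
  constructor
  · intro h i hi
    by_contra hc
    rw [Finset.mem_Icc] at hi
    have h2 := h (i : ℕ∞) ⟨i, ⟨hi.1, not_le.mp hc⟩, rfl⟩
    have h3 : k + 1 ≤ i := by exact_mod_cast h2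
    omega
  · rintro h _ ⟨j, ⟨hj1, hj2⟩, rfl⟩
    by_contra hc
    have h3 : ¬ (k + 1 ≤ j) := fun h4 => hc (by beta_reduce; exact_mod_cast h4)
    exact absurd (h j (Finset.mem_Icc.mpr ⟨hj1, by omega⟩)) (not_le.mpr hj2)

/-- Let `X` have common marginal distribution function `F` and extremal index
`θ ∈ (0,1]` in the strong sense: for every sequence `(v_n)` and every `s > 0` with
`n (1 − F(v_n)) → s` one has `P{max{X_1,...,X_n} ≤ v_n} → exp (−θ s)`.
If `n (1 − F(u_n)) → τ` with `τ > 0`, then for every `x > 0`,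
`P{T*(u_n) > ⌊n x⌋} → exp (−θ τ x)` where `T*` is the first hitting time. -/
theorem tendsto_prob_hittingTime_gt {Ω : Type*} [MeasurableSpace Ω] (P : Measure Ω)
    [IsProbabilityMeasure P] (X : ℕ → Ω → ℝ) (F : ℝ → ℝ)
    (hF : ∀ x : ℝ, F x = (P {ω | X 1 ω ≤ x}).toReal)
    (θ : ℝ) (hθ0 : 0 < θ) (hθ1 : θ ≤ 1)
    (hEI : ∀ (v : ℕ → ℝ) (s : ℝ), 0 < s →
      Tendsto (fun n : ℕ => (n : ℝ) * (1 - F (v n))) atTop (nhds s) →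
      Tendsto (fun n : ℕ => (P {ω | ∀ i ∈ Finset.Icc 1 n, X i ω ≤ v n}).toReal)
        atTop (nhds (Real.exp (-θ * s))))
    (τ : ℝ) (hτ : 0 < τ) (u : ℕ → ℝ)
    (hu : Tendsto (fun n : ℕ => (n : ℝ) * (1 - F (u n))) atTop (nhds τ))
    (x : ℝ) (hx : 0 < x) :
    Tendsto (fun n : ℕ => (P {ω | (⌊(n : ℝ) * x⌋₊ : ℕ∞) < hittingTime X (u n) ω}).toReal)
      atTop (nhds (Real.exp (-θ * τ * x))) := by
  simp only [lt_hittingTime_iff]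
  rw [Metric.tendsto_atTop]
  intro ε hε
  set D : ℕ → ℕ → ℝ := fun m n =>
    dist (P {ω | ∀ i ∈ Finset.Icc 1 m, X i ω ≤ u n}).toReal (Real.exp (-θ * τ * x)) with hD
  have hex : ∀ m : ℕ, ∃ n : ℕ, |(n : ℝ) * x - m| ≤ 1 + x ∧
      ((∃ k : ℕ, ⌊(k : ℝ) * x⌋₊ = m ∧ ε ≤ D m k) → ε ≤ D m n) := by
    intro m
    by_cases h : ∃ k : ℕ, ⌊(k : ℝ) * x⌋₊ = m ∧ ε ≤ D m k
    · obtain ⟨k, hk, hk2⟩ := h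
      refine ⟨k, ?_, fun _ => hk2⟩
      have h1 := Nat.floor_le (a := (k : ℝ) * x) (by positivity)
      have h2 := Nat.lt_floor_add_one ((k : ℝ) * x)
      rw [hk] at h1 h2
      rw [abs_le]
      constructor <;> linarith
    · refine ⟨⌈(m : ℝ) / x⌉₊, ?_, fun h' => absurd h' h⟩
      have h1 := Nat.le_ceil ((m : ℝ) / x)
      have h2 := Nat.ceil_lt_add_one (a := (m : ℝ) / x) (by positivity)
      rw [div_le_iff₀ hx] at h1
      have h3 := mul_lt_mul_of_pos_right h2 hx
      rw [add_mul, div_mul_cancel₀ _ hx.ne'] at h3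
      rw [abs_le]
      constructor <;> linarith
  choose g hg1 hg2 using hex
  have hgR : Tendsto (fun m => (g m : ℝ)) atTop atTop := by
    have h0 : Tendsto (fun m : ℕ => ((m : ℝ) + (-(1 + x))) / x) atTop atTop :=
      (tendsto_atTop_add_const_right _ _ tendsto_natCast_atTop_atTop).atTop_div_const hx
    refine tendsto_atTop_mono (fun m => ?_) h0
    rw [div_le_iff₀ hx]
    have := (abs_le.mp (hg1 m)).1
    linarith
  have hg : Tendsto g atTop atTop := tendsto_natCast_atTop_iff.mp hgR
  have hratio : Tendsto (fun m : ℕ => (m : ℝ) / g m) atTop (nhds x) := by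
    rw [tendsto_iff_dist_tendsto_zero]
    have h0 : Tendsto (fun m : ℕ => (1 + x) / (g m : ℝ)) atTop (nhds 0) :=
      hgR.const_div_atTop _
    refine tendsto_of_tendsto_of_tendsto_of_le_of_le' tendsto_const_nhds h0
      (Eventually.of_forall fun _ => dist_nonneg) ?_
    filter_upwards [hgR.eventually_gt_atTop 0] with m hm
    rw [dist_comm, Real.dist_eq]
    have : x - (m : ℝ) / g m = ((g m : ℝ) * x - m) / g m := by field_simp
    rw [this, abs_div, abs_of_pos hm]
    gcongr
    exact hg1 m
  have hv : Tendsto (fun m : ℕ => (m : ℝ) * (1 - F (u (g m)))) atTop (nhds (x * τ)) := by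
    refine (hratio.mul (hu.comp hg)).congr' ?_
    filter_upwards [hgR.eventually_gt_atTop 0] with m hm
    simp only [Function.comp]
    field_simp
  have hlim := hEI (fun m => u (g m)) (x * τ) (by positivity) hv
  rw [show -θ * (x * τ) = -θ * τ * x by ring, Metric.tendsto_atTop] at hlim
  obtain ⟨M, hM⟩ := hlim ε hε
  have hfl : Tendsto (fun n : ℕ => ⌊(n : ℝ) * x⌋₊) atTop atTop :=
    tendsto_nat_floor_atTop.comp (tendsto_natCast_atTop_atTop.atTop_mul_const hx)
  obtain ⟨N, hN⟩ := (hfl.eventually_ge_atTop M).exists_forall_of_atTop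
  refine ⟨N, fun n hn => ?_⟩
  by_contra hc
  exact absurd (hM _ (hN n hn)) (not_lt.mpr (hg2 _ ⟨n, rfl, not_lt.mp hc⟩))
end

section
/- Let X : ℕ → Ω → ℝ be a sequence of random variables with common marginal distribution function F, having extremal index θ ∈ (0, 1] in the strong sense (for every real sequence (v_n) and every s > 0 with n(1 − F(v_n)) → s, P{max{X_1,...,X_n} ≤ v_n} → e^{−θs}). Let (u_n) satisfy n(1 − F(u_n)) → 1. If in addition the family {T*(u_n)/n : n ≥ 1} is uniformly integrable, then lim_{n→∞} E(T*(u_n)/n) = 1/θ, where T*(u) = min{j ≥ 1 : X_j > u} is the first hitting time of the level u. -/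
open MeasureTheory Filter

lemma hittingTime_toNat {Ω : Type*} (X : ℕ → Ω → ℝ) (u : ℝ) (ω : Ω) :
    (hittingTime X u ω).toNat = sInf {j : ℕ | 1 ≤ j ∧ u < X j ω} := by
  unfold hittingTime
  rcases Set.eq_empty_or_nonempty {j : ℕ | 1 ≤ j ∧ u < X j ω} with h | h
  · rw [h]; simp
  · have h1 : sInf ((fun j : ℕ => (j : ℕ∞)) '' {j : ℕ | 1 ≤ j ∧ u < X j ω})
        = ((sInf {j : ℕ | 1 ≤ j ∧ u < X j ω} : ℕ) : ℕ∞) := by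
      apply le_antisymm
      · exact sInf_le ⟨_, Nat.sInf_mem h, rfl⟩
      · apply le_sInf
        rintro _ ⟨j, hj, rfl⟩
        exact Nat.cast_le.2 (Nat.sInf_le hj)
    rw [h1]; rfl

lemma hit_lt {Ω : Type*} (X : ℕ → Ω → ℝ) (u : ℝ) (ω : Ω) (m : ℕ)
    (h : m < (hittingTime X u ω).toNat) : ∀ i ∈ Finset.Icc 1 m, X i ω ≤ u := by
  rw [hittingTime_toNat] at h
  intro i hi
  rw [Finset.mem_Icc] at hi
  by_contra hc
  exact Nat.notMem_of_lt_sInf (lt_of_le_of_lt hi.2 h) ⟨hi.1, not_le.1 hc⟩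

lemma hit_zero {Ω : Type*} (X : ℕ → Ω → ℝ) (u : ℝ) (ω : Ω) (m : ℕ)
    (h : (hittingTime X u ω).toNat = 0) : ∀ i ∈ Finset.Icc 1 m, X i ω ≤ u := by
  rw [hittingTime_toNat, Nat.sInf_eq_zero] at h
  intro i hi
  rw [Finset.mem_Icc] at hi
  by_contra hc
  rcases h with h | h
  · exact absurd h.1 (by norm_num)
  · have : i ∈ {j : ℕ | 1 ≤ j ∧ u < X j ω} := ⟨hi.1, not_le.1 hc⟩
    rw [h] at this
    exact this

lemma hit_or {Ω : Type*} (X : ℕ → Ω → ℝ) (u : ℝ) (ω : Ω) (m : ℕ)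
    (h : ∀ i ∈ Finset.Icc 1 m, X i ω ≤ u) :
    m < (hittingTime X u ω).toNat ∨ (hittingTime X u ω).toNat = 0 := by
  rw [hittingTime_toNat]
  rcases Set.eq_empty_or_nonempty {j : ℕ | 1 ≤ j ∧ u < X j ω} with h' | h'
  · right; rw [h']; simp
  · left
    have h2 := Nat.sInf_mem h'
    by_contra hc
    exact absurd (h _ (Finset.mem_Icc.2 ⟨h2.1, not_lt.1 hc⟩)) (not_le.2 h2.2)

lemma ratio_tendsto (x : ℝ) (hx : 0 < x) (g : ℕ → ℕ)
    (hg : ∀ j : ℕ, |x * g j - j| ≤ 1 + x) :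
    Tendsto g atTop atTop ∧ Tendsto (fun j : ℕ => (j : ℝ) / g j) atTop (nhds x) := by
  have hG : Tendsto (fun j => (g j : ℝ)) atTop atTop := by
    have h1 : Tendsto (fun j : ℕ => ((j : ℝ) + (-(1 + x))) / x) atTop atTop :=
      (tendsto_atTop_add_const_right _ _ tendsto_natCast_atTop_atTop).atTop_div_const hx
    refine tendsto_atTop_mono (fun j => ?_) h1
    rw [div_le_iff₀ hx]
    have := (abs_le.1 (hg j)).1
    linarith
  refine ⟨tendsto_natCast_atTop_iff.1 hG, ?_⟩
  rw [tendsto_iff_dist_tendsto_zero]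
  have h2 : Tendsto (fun j => (1 + x) / (g j : ℝ)) atTop (nhds 0) :=
    tendsto_const_nhds.div_atTop hG
  refine squeeze_zero' (Eventually.of_forall fun _ => dist_nonneg) ?_ h2
  filter_upwards [hG.eventually_gt_atTop 0] with j hj
  rw [Real.dist_eq]
  have : (j : ℝ) / g j - x = -((x * g j - j) / g j) := by field_simp; ring
  rw [this, abs_neg, abs_div, abs_of_pos hj]
  exact div_le_div_of_nonneg_right (hg j) hj.le

lemma max_tendsto {Ω : Type*} [MeasurableSpace Ω] (P : Measure Ω)
    (X : ℕ → Ω → ℝ) (F : ℝ → ℝ) (θ : ℝ)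
    (hEI : ∀ (v : ℕ → ℝ) (s : ℝ), 0 < s →
      Tendsto (fun n : ℕ => (n : ℝ) * (1 - F (v n))) atTop (nhds s) →
      Tendsto (fun n : ℕ => (P {ω | ∀ i ∈ Finset.Icc 1 n, X i ω ≤ v n}).toReal)
        atTop (nhds (Real.exp (-θ * s))))
    (u : ℕ → ℝ)
    (hu : Tendsto (fun n : ℕ => (n : ℝ) * (1 - F (u n))) atTop (nhds (1 : ℝ)))
    (x : ℝ) (hx : 0 < x) (m : ℕ → ℕ) (hm : ∀ n : ℕ, |x * n - m n| ≤ 1) :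
    Tendsto (fun n : ℕ => (P {ω | ∀ i ∈ Finset.Icc 1 (m n), X i ω ≤ u n}).toReal)
        atTop (nhds (Real.exp (-θ * x))) := by
  have hmT : Tendsto m atTop atTop := by
    rw [← tendsto_natCast_atTop_iff (R := ℝ)]
    have h1 : Tendsto (fun j : ℕ => (x * (j : ℝ)) + (-1)) atTop atTop :=
      tendsto_atTop_add_const_right _ _ (tendsto_natCast_atTop_atTop.const_mul_atTop hx)
    refine tendsto_atTop_mono (fun j => ?_) h1
    have := (abs_le.1 (hm j)).2
    linarith
  apply tendsto_of_subseq_tendsto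
  intro ns hns
  obtain ⟨ψ, -, hψ⟩ := strictMono_subseq_of_tendsto_atTop (hmT.comp hns)
  refine ⟨ψ, ?_⟩
  classical
  let g : ℕ → ℕ := fun j => if h : ∃ k, m (ns (ψ k)) = j then ns (ψ h.choose) else ⌈(j : ℝ) / x⌉₊
  have hgk : ∀ k, g (m (ns (ψ k))) = ns (ψ k) := by
    intro k
    have h : ∃ k', m (ns (ψ k')) = m (ns (ψ k)) := ⟨k, rfl⟩
    have h2 : h.choose = k := hψ.injective h.choose_spec
    simp only [g, dif_pos h, h2]
  have hg : ∀ j : ℕ, |x * g j - j| ≤ 1 + x := by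
    intro j
    by_cases h : ∃ k, m (ns (ψ k)) = j
    · obtain ⟨k, rfl⟩ := h
      rw [hgk]
      linarith [hm (ns (ψ k))]
    · simp only [g, dif_neg h]
      have h1 := Nat.le_ceil ((j : ℝ) / x)
      have h2 := Nat.ceil_lt_add_one (a := (j : ℝ) / x) (by positivity)
      rw [div_le_iff₀ hx] at h1
      have h3 : (j : ℝ) / x * x = j := by field_simp
      rw [abs_le]
      constructor <;> nlinarith
  obtain ⟨hg1, hg2⟩ := ratio_tendsto x hx g hg
  have h3 := hg2.mul (hu.comp hg1)
  rw [mul_one] at h3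
  have h4 := hEI (fun j => u (g j)) x hx (h3.congr' (by
    filter_upwards [hg1.eventually_gt_atTop 0] with j hj
    have : (g j : ℝ) ≠ 0 := by positivity
    simp only [Function.comp]
    field_simp))
  have h5 := h4.comp hψ.tendsto_atTop
  refine h5.congr fun k => ?_
  simp only [Function.comp, hgk]

lemma hit_tendsto {Ω : Type*} [MeasurableSpace Ω] (P : Measure Ω) [IsProbabilityMeasure P]
    (X : ℕ → Ω → ℝ) (F : ℝ → ℝ) (θ : ℝ) (hθ0 : 0 < θ)
    (hEI : ∀ (v : ℕ → ℝ) (s : ℝ), 0 < s →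
      Tendsto (fun n : ℕ => (n : ℝ) * (1 - F (v n))) atTop (nhds s) →
      Tendsto (fun n : ℕ => (P {ω | ∀ i ∈ Finset.Icc 1 n, X i ω ≤ v n}).toReal)
        atTop (nhds (Real.exp (-θ * s))))
    (u : ℕ → ℝ)
    (hu : Tendsto (fun n : ℕ => (n : ℝ) * (1 - F (u n))) atTop (nhds (1 : ℝ)))
    (x : ℝ) (hx : 0 < x) :
    Tendsto (fun n : ℕ => P.real {ω | x ≤ ((hittingTime X (u n) ω).toNat : ℝ) / n})
        atTop (nhds (Real.exp (-θ * x))) := by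
  have hz : Tendsto (fun n : ℕ => P.real {ω | (hittingTime X (u n) ω).toNat = 0})
      atTop (nhds 0) := by
    have hexp : Tendsto (fun k : ℕ => Real.exp (-θ * ((k : ℝ) + 1))) atTop (nhds 0) := by
      apply Real.tendsto_exp_atBot.comp
      exact (tendsto_atTop_add_const_right _ _ tendsto_natCast_atTop_atTop).const_mul_atTop_of_neg
        (by linarith)
    rw [Metric.tendsto_atTop']
    intro ε hε
    obtain ⟨k, hk⟩ := (hexp.eventually_lt_const hε).exists
    have h1 := max_tendsto P X F θ hEI u hu ((k : ℝ) + 1) (by positivity)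
      (fun n => (k + 1) * n) (fun n => by simp)
    obtain ⟨N, hN⟩ := eventually_atTop.1 (h1.eventually_lt_const hk)
    refine ⟨N, fun n hn => ?_⟩
    rw [Real.dist_eq, sub_zero, abs_of_nonneg measureReal_nonneg]
    refine lt_of_le_of_lt ?_ (hN n hn.le)
    exact measureReal_mono (fun ω hω => hit_zero X (u n) ω _ hω)
  have hM := max_tendsto P X F θ hEI u hu x hx (fun n => ⌈x * n⌉₊ - 1) (fun n => by
    rcases Nat.eq_zero_or_pos n with rfl | hn
    · simp
    · have hn' : (0 : ℝ) < n := by exact_mod_cast hn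
      have h0 : 0 < x * n := by positivity
      have h1 := Nat.le_ceil (x * n)
      have h2 := Nat.ceil_lt_add_one (a := x * n) h0.le
      have h3 : 1 ≤ ⌈x * n⌉₊ := Nat.ceil_pos.2 h0
      rw [Nat.cast_sub h3, abs_le, Nat.cast_one]
      constructor <;> linarith)
  have heq : ∀ n : ℕ, 0 < n → ∀ ω, (x ≤ ((hittingTime X (u n) ω).toNat : ℝ) / n ↔
      ⌈x * n⌉₊ - 1 < (hittingTime X (u n) ω).toNat) := by
    intro n hn ω
    have hn' : (0 : ℝ) < n := by exact_mod_cast hn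
    have h0 : 0 < x * n := by positivity
    have h3 : 1 ≤ ⌈x * n⌉₊ := Nat.ceil_pos.2 h0
    rw [le_div_iff₀ hn', ← Nat.ceil_le]
    omega
  have hlow := hM.sub hz
  rw [sub_zero] at hlow
  refine tendsto_of_tendsto_of_tendsto_of_le_of_le' hlow hM ?_ ?_
  · filter_upwards [eventually_gt_atTop 0] with n hn
    rw [sub_le_iff_le_add]
    refine le_trans ?_ (measureReal_union_le _ _)
    refine measureReal_mono (fun ω hω => ?_)
    rcases hit_or X (u n) ω _ hω with h | h
    · exact Or.inl ((heq n hn ω).2 h)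
    · exact Or.inr h
  · filter_upwards [eventually_gt_atTop 0] with n hn
    exact measureReal_mono (fun ω hω => hit_lt X (u n) ω _ ((heq n hn ω).1 hω))

lemma ui_tendsto {Ω : Type*} [MeasurableSpace Ω] (P : Measure Ω) [IsProbabilityMeasure P]
    (θ : ℝ) (hθ0 : 0 < θ) (Y : ℕ → Ω → ℝ) (hY0 : ∀ n ω, 0 ≤ Y n ω)
    (hUI : UniformIntegrable Y 1 P)
    (hY : ∀ x : ℝ, 0 < x → Tendsto (fun n : ℕ => P.real {ω | x ≤ Y n ω})
        atTop (nhds (Real.exp (-θ * x)))) :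
    Tendsto (fun n : ℕ => ∫ ω, Y n ω ∂P) atTop (nhds (1 / θ)) := by
  have hint : ∀ n, Integrable (Y n) P := fun n => memLp_one_iff_integrable.1 (hUI.memLp n)
  have hmin : ∀ (A : ℝ) n, Integrable (fun ω => min (Y n ω) A) P := fun A n =>
    (hint n).inf (integrable_const A)
  have htr : ∀ A : ℝ, 0 < A → Tendsto (fun n : ℕ => ∫ ω, min (Y n ω) A ∂P) atTop
      (nhds ((1 - Real.exp (-θ * A)) / θ)) := by
    intro A hA
    have h1 : ∀ n, ∫ ω, min (Y n ω) A ∂P = ∫ t in Set.Ioc 0 A, P.real {ω | t ≤ Y n ω} := by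
      intro n
      rw [(hmin A n).integral_eq_integral_Ioc_meas_le (M := A)
        (Eventually.of_forall fun ω => le_min (hY0 n ω) hA.le)
        (Eventually.of_forall fun ω => min_le_right _ _)]
      refine setIntegral_congr_fun measurableSet_Ioc (fun t ht => ?_)
      simp [le_min_iff, ht.2]
    have h2 : ∫ t in Set.Ioc 0 A, Real.exp (-θ * t) = (1 - Real.exp (-θ * A)) / θ := by
      rw [← intervalIntegral.integral_of_le hA.le,
        intervalIntegral.integral_comp_mul_left (fun t => Real.exp t) (neg_ne_zero.2 hθ0.ne')]
      simp
      field_simp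
      ring
    simp_rw [h1]
    rw [← h2]
    refine tendsto_integral_filter_of_dominated_convergence (fun _ => 1) ?_ ?_ ?_ ?_
    · refine Eventually.of_forall fun n => Measurable.aestronglyMeasurable ?_
      apply Antitone.measurable
      intro s t hst
      exact measureReal_mono (fun ω hω => le_trans hst hω)
    · refine Eventually.of_forall fun n => Eventually.of_forall fun t => ?_
      rw [Real.norm_of_nonneg measureReal_nonneg]
      exact measureReal_le_one
    · exact integrable_const _
    · rw [ae_restrict_iff' measurableSet_Ioc]
      exact Eventually.of_forall fun t ht => hY t ht.1
  rw [Metric.tendsto_atTop']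
  intro ε hε
  obtain ⟨C, hC⟩ := hUI.spec one_ne_zero ENNReal.one_ne_top (ε := ε / 3) (by positivity)
  have hexp : Tendsto (fun A : ℝ => Real.exp (-θ * A) / θ) atTop (nhds 0) := by
    rw [← zero_div θ]
    refine Tendsto.div_const (Real.tendsto_exp_atBot.comp ?_) _
    exact tendsto_id.const_mul_atTop_of_neg (by linarith)
  obtain ⟨A, hA1, hA2, hA3⟩ := ((hexp.eventually_lt_const (show 0 < ε / 3 by positivity)).and
    ((eventually_gt_atTop 0).and (eventually_ge_atTop (C : ℝ)))).exists
  obtain ⟨N, hN⟩ := Metric.tendsto_atTop'.1 (htr A hA2) (ε / 3) (by positivity)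
  refine ⟨N, fun n hn => ?_⟩
  have h1 := hN n hn
  rw [Real.dist_eq, abs_lt] at h1
  have h2 : ∫ ω, min (Y n ω) A ∂P ≤ ∫ ω, Y n ω ∂P :=
    integral_mono (hmin A n) (hint n) (fun ω => min_le_left _ _)
  have h3 : ∫ ω, Y n ω ∂P - ∫ ω, min (Y n ω) A ∂P ≤ ε / 3 := by
    rw [← integral_sub (hint n) (hmin A n)]
    rw [integral_eq_lintegral_of_nonneg_ae
      (Eventually.of_forall fun ω => sub_nonneg.2 (min_le_left _ _))
      ((hint n).sub (hmin A n)).aestronglyMeasurable]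
    refine ENNReal.toReal_le_of_le_ofReal (by positivity) (le_trans ?_ (hC n))
    rw [eLpNorm_one_eq_lintegral_enorm]
    refine lintegral_mono fun ω => ?_
    by_cases h : Y n ω ≤ A
    · simp [min_eq_left h]
    · rw [not_le] at h
      have hm : ω ∈ {x | C ≤ ‖Y n x‖₊} := by
        show C ≤ ‖Y n ω‖₊
        rw [← NNReal.coe_le_coe, coe_nnnorm, Real.norm_of_nonneg (hY0 n ω)]
        linarith
      rw [Set.indicator_of_mem hm, ← ofReal_norm, Real.norm_of_nonneg (hY0 n ω)]
      apply ENNReal.ofReal_le_ofReal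
      rw [min_eq_right h.le]
      linarith
  have h4 : (1 - Real.exp (-θ * A)) / θ = 1 / θ - Real.exp (-θ * A) / θ := by ring
  have h5 : 0 < Real.exp (-θ * A) / θ := by positivity
  rw [h4] at h1
  rw [Real.dist_eq, abs_lt]
  constructor <;> linarith

/-- Let `X` have common marginal distribution function `F` and extremal index
`θ ∈ (0,1]` in the strong sense. If `n (1 − F(u_n)) → 1` and the family
`{T*(u_n)/n : n ≥ 1}` is uniformly integrable, then `E (T*(u_n)/n) → 1/θ`,
where `T*(u)` is the first hitting time of the level `u`. -/
theorem tendsto_expectation_hittingTime {Ω : Type*} [MeasurableSpace Ω] (P : Measure Ω)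
    [IsProbabilityMeasure P] (X : ℕ → Ω → ℝ) (F : ℝ → ℝ)
    (hF : ∀ x : ℝ, F x = (P {ω | X 1 ω ≤ x}).toReal)
    (θ : ℝ) (hθ0 : 0 < θ) (hθ1 : θ ≤ 1)
    (hEI : ∀ (v : ℕ → ℝ) (s : ℝ), 0 < s →
      Tendsto (fun n : ℕ => (n : ℝ) * (1 - F (v n))) atTop (nhds s) →
      Tendsto (fun n : ℕ => (P {ω | ∀ i ∈ Finset.Icc 1 n, X i ω ≤ v n}).toReal)
        atTop (nhds (Real.exp (-θ * s))))
    (u : ℕ → ℝ)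
    (hu : Tendsto (fun n : ℕ => (n : ℝ) * (1 - F (u n))) atTop (nhds (1 : ℝ)))
    (hUI : UniformIntegrable
      (fun (n : ℕ) (ω : Ω) => ((hittingTime X (u n) ω).toNat : ℝ) / n) 1 P) :
    Tendsto (fun n : ℕ => ∫ ω, ((hittingTime X (u n) ω).toNat : ℝ) / n ∂P)
      atTop (nhds (1 / θ)) := by
  exact ui_tendsto P θ hθ0 _ (fun n ω => by positivity) hUI
    (fun x hx => hit_tendsto P X F θ hθ0 hEI u hu x hx)
end
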